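/- (Strong duality.) Let S be a nonempty finite set of natural numbers, M a positive integer, and μ_1, …, μ_M ∈ ℝ. Suppose λ* ∈ ℝ^M is a global minimizer of the dual function Ψ(λ) = ln Z(λ) + ∑_{k=1}^M λ_k μ_k, where Z(λ) = ∑_{x∈S} exp(−∑_{k=1}^M λ_k x^k). Then the exponential-family distribution q_{λ*}(x) = exp(−∑_{k=1}^M λ_k* x^k)/Z(λ*) satisfies the moment constraints ∑_{x∈S} x^k q_{λ*}(x) = μ_k for k = 1, …, M, its entropy equals Ψ(λ*), and it maximizes the entropy −∑_{x∈S} g(x) ln g(x) over all probability mass functions g on S satisfying these moment constraints. -/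

import Mathlib

/-!
The cross entropy `-∑ g log q_l` of any `g` meeting the moment constraints, relative to any member
`q_l` of the exponential family, equals `Ψ(l)`, because `log q_l` is affine in the statistics.
Gibbs' inequality therefore bounds the entropy of every feasible `g` by `Ψ(l)`. The gradient of `Ψ`
at `l` is `μ` minus the moment vector of `q_l`, so at a minimizer `q_l` is itself feasible; its
entropy is then its cross entropy relative to itself, and the bound is attained.
-/

section Entropy

open Finset

variable {α : Type*} {S : Finset α} {g q : α → ℝ}

/-- The Shannon entropy, in nats, of a weight function on a finite set. Since `Real.log 0 = 0`,
vanishing weights contribute nothing. -/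
noncomputable def shannonEntropy (S : Finset α) (g : α → ℝ) : ℝ :=
  -∑ x ∈ S, g x * Real.log (g x)

/-- The cross entropy of `g` relative to `q`. It is meaningful only where `q` does not vanish:
a zero of `q` contributes `0` rather than `∞`. -/
noncomputable def crossEntropy (S : Finset α) (g q : α → ℝ) : ℝ :=
  -∑ x ∈ S, g x * Real.log (q x)

lemma sub_le_mul_log_sub_mul_log {a b : ℝ} (ha : 0 ≤ a) (hb : 0 < b) :
    a - b ≤ a * Real.log a - a * Real.log b := by
  rcases ha.eq_or_lt with rfl | ha
  · simpa using hb.le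
  calc a - b = b * (a / b - 1) := by field_simp
    _ ≤ b * (a / b * Real.log (a / b)) := by
        gcongr
        exact Real.self_sub_one_le_mul_log (by positivity)
    _ = a * Real.log a - a * Real.log b := by
        rw [Real.log_div ha.ne' hb.ne']
        field_simp

theorem shannonEntropy_le_crossEntropy (hg : ∀ x ∈ S, 0 ≤ g x) (hq : ∀ x ∈ S, 0 < q x)
    (hqg : ∑ x ∈ S, q x ≤ ∑ x ∈ S, g x) : shannonEntropy S g ≤ crossEntropy S g q := by
  have hsum : ∑ x ∈ S, (g x - q x) ≤
      ∑ x ∈ S, (g x * Real.log (g x) - g x * Real.log (q x)) :=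
    sum_le_sum fun x hx ↦ sub_le_mul_log_sub_mul_log (hg x hx) (hq x hx)
  rw [sum_sub_distrib, sum_sub_distrib] at hsum
  unfold shannonEntropy crossEntropy
  linarith

end Entropy

section ExponentialFamily

open Finset

variable {α ι : Type*}

/-- The vector of moments of the weight function `g` on `S` with respect to the vector-valued
statistic `f`. Power moments are the case `f x k = x ^ (k + 1)`. -/
def momentVector (S : Finset α) (f : α → ι → ℝ) (g : α → ℝ) : ι → ℝ :=
  fun k ↦ ∑ x ∈ S, f x k * g x

variable [Fintype ι] {S : Finset α} {f : α → ι → ℝ} {μ : ι → ℝ} {g : α → ℝ}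

/-- The partition function `Z` of the exponential family on `S` with statistic `f`, in the sign
convention where the weight of `x` is `exp (-⟨l, f x⟩)`. -/
noncomputable def partitionFunction (S : Finset α) (f : α → ι → ℝ) (l : ι → ℝ) : ℝ :=
  ∑ x ∈ S, Real.exp (-(l ⬝ᵥ f x))

/-- The member `q_l` of the exponential family on `S` with statistic `f`. It is defined on all of
`α`, but normalized over `S`. -/
noncomputable def gibbsDensity (S : Finset α) (f : α → ι → ℝ) (l : ι → ℝ) (x : α) : ℝ :=
  Real.exp (-(l ⬝ᵥ f x)) / partitionFunction S f l

/-- The Lagrange dual function `Ψ` of the problem of maximizing the entropy over the probability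
mass functions on `S` with moment vector `μ`. -/
noncomputable def entropyDual (S : Finset α) (f : α → ι → ℝ) (μ l : ι → ℝ) : ℝ :=
  Real.log (partitionFunction S f l) + l ⬝ᵥ μ

lemma dotProduct_momentVector (l : ι → ℝ) :
    l ⬝ᵥ momentVector S f g = ∑ x ∈ S, g x * (l ⬝ᵥ f x) := by
  have hmoment : momentVector S f g = ∑ x ∈ S, g x • f x := by
    ext k
    simp [momentVector, mul_comm]
  simp only [hmoment, dotProduct_sum, dotProduct_smul, smul_eq_mul]

lemma partitionFunction_pos (hS : S.Nonempty) (l : ι → ℝ) : 0 < partitionFunction S f l :=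
  sum_pos (fun _ _ ↦ Real.exp_pos _) hS

lemma gibbsDensity_pos (hS : S.Nonempty) (l : ι → ℝ) (x : α) : 0 < gibbsDensity S f l x :=
  div_pos (Real.exp_pos _) (partitionFunction_pos hS l)

lemma sum_gibbsDensity (hS : S.Nonempty) (l : ι → ℝ) : ∑ x ∈ S, gibbsDensity S f l x = 1 := by
  simp only [gibbsDensity, ← sum_div]
  exact div_self (partitionFunction_pos hS l).ne'

lemma log_gibbsDensity (hS : S.Nonempty) (l : ι → ℝ) (x : α) :
    Real.log (gibbsDensity S f l x) = -(l ⬝ᵥ f x) - Real.log (partitionFunction S f l) := by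
  rw [gibbsDensity, Real.log_div (Real.exp_ne_zero _) (partitionFunction_pos hS l).ne',
    Real.log_exp]

theorem crossEntropy_gibbsDensity (hS : S.Nonempty) (hg : ∑ x ∈ S, g x = 1) (l : ι → ℝ) :
    crossEntropy S g (gibbsDensity S f l) = entropyDual S f (momentVector S f g) l := by
  simp only [crossEntropy, log_gibbsDensity hS, mul_sub, mul_neg, sum_sub_distrib,
    sum_neg_distrib, ← sum_mul, hg, ← dotProduct_momentVector, entropyDual]
  ring

theorem shannonEntropy_gibbsDensity (hS : S.Nonempty) (l : ι → ℝ) :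
    shannonEntropy S (gibbsDensity S f l) =
      entropyDual S f (momentVector S f (gibbsDensity S f l)) l :=
  crossEntropy_gibbsDensity hS (sum_gibbsDensity hS l) l

theorem shannonEntropy_le_entropyDual (hS : S.Nonempty) (hg₀ : ∀ x ∈ S, 0 ≤ g x)
    (hg₁ : ∑ x ∈ S, g x = 1) (l : ι → ℝ) :
    shannonEntropy S g ≤ entropyDual S f (momentVector S f g) l := by
  rw [← crossEntropy_gibbsDensity hS hg₁]
  exact shannonEntropy_le_crossEntropy hg₀ (fun x _ ↦ gibbsDensity_pos hS l x)
    (by rw [sum_gibbsDensity hS, hg₁])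

lemma hasLineDerivAt_dotProduct (w l v : ι → ℝ) :
    HasLineDerivAt ℝ (fun l : ι → ℝ ↦ l ⬝ᵥ w) (v ⬝ᵥ w) l v := by
  simpa [HasLineDerivAt, add_dotProduct, smul_dotProduct] using
    ((hasDerivAt_id (0 : ℝ)).mul_const (v ⬝ᵥ w)).const_add (l ⬝ᵥ w)

lemma hasLineDerivAt_partitionFunction (l v : ι → ℝ) :
    HasLineDerivAt ℝ (partitionFunction S f)
      (-∑ x ∈ S, Real.exp (-(l ⬝ᵥ f x)) * (v ⬝ᵥ f x)) l v := by
  have hexp (x : α) : HasLineDerivAt ℝ (fun l : ι → ℝ ↦ Real.exp (-(l ⬝ᵥ f x)))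
      (-(Real.exp (-(l ⬝ᵥ f x)) * (v ⬝ᵥ f x))) l v := by
    simpa [HasLineDerivAt] using (hasLineDerivAt_dotProduct (f x) l v).fun_neg.exp
  rw [← sum_neg_distrib]
  exact HasDerivAt.fun_sum fun x _ ↦ hexp x

theorem hasLineDerivAt_entropyDual (hS : S.Nonempty) (l v : ι → ℝ) :
    HasLineDerivAt ℝ (entropyDual S f μ)
      (v ⬝ᵥ (μ - momentVector S f (gibbsDensity S f l))) l v := by
  have hlog : HasLineDerivAt ℝ (fun l ↦ Real.log (partitionFunction S f l))
      (-(v ⬝ᵥ momentVector S f (gibbsDensity S f l))) l v := by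
    have := (hasLineDerivAt_partitionFunction (S := S) (f := f) l v).log
      (by simpa using (partitionFunction_pos hS l).ne')
    simpa [HasLineDerivAt, dotProduct_momentVector, gibbsDensity, neg_div, sum_div,
      div_mul_eq_mul_div] using this
  rw [dotProduct_sub, sub_eq_neg_add]
  exact HasDerivAt.add hlog (hasLineDerivAt_dotProduct μ l v)

theorem momentVector_gibbsDensity_of_isLocalMin (hS : S.Nonempty) {l : ι → ℝ}
    (hl : IsLocalMin (entropyDual S f μ) l) : momentVector S f (gibbsDensity S f l) = μ := by
  have hgrad (v : ι → ℝ) : v ⬝ᵥ (μ - momentVector S f (gibbsDensity S f l)) = 0 :=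
    hl.hasLineDerivAt_eq_zero (hasLineDerivAt_entropyDual hS l v)
  exact (sub_eq_zero.mp <| dotProduct_eq_zero _ fun v ↦ dotProduct_comm v _ ▸ hgrad v).symm

theorem maxEntropy_strong_duality_general (hS : S.Nonempty) {l : ι → ℝ}
    (hl : IsLocalMin (entropyDual S f μ) l) :
    momentVector S f (gibbsDensity S f l) = μ ∧
      shannonEntropy S (gibbsDensity S f l) = entropyDual S f μ l ∧
      ∀ g : α → ℝ, (∀ x ∈ S, 0 ≤ g x) → ∑ x ∈ S, g x = 1 → momentVector S f g = μ →
        shannonEntropy S g ≤ shannonEntropy S (gibbsDensity S f l) := by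
  have hmoment := momentVector_gibbsDensity_of_isLocalMin hS hl
  have hentropy : shannonEntropy S (gibbsDensity S f l) = entropyDual S f μ l := by
    rw [shannonEntropy_gibbsDensity hS, hmoment]
  refine ⟨hmoment, hentropy, fun g hg₀ hg₁ hgμ ↦ ?_⟩
  rw [hentropy, ← hgμ]
  exact shannonEntropy_le_entropyDual hS hg₀ hg₁ l

end ExponentialFamily

/-- Strong duality: if `λ*` is a global minimizer of the dual function `Ψ`, then the
exponential-family distribution `q_{λ*}` satisfies the moment constraints, its entropy
equals `Ψ(λ*)`, and it maximizes the entropy among all probability mass functions on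
`S` satisfying the moment constraints. -/
theorem maxEntropy_strong_duality
    (S : Finset ℕ) (hS : S.Nonempty) (M : ℕ) (hM : 0 < M)
    (μ : Fin M → ℝ)
    (Z : (Fin M → ℝ) → ℝ)
    (hZ : ∀ l : Fin M → ℝ,
      Z l = ∑ x ∈ S, Real.exp (-∑ k : Fin M, l k * (x : ℝ) ^ (k.1 + 1)))
    (Ψ : (Fin M → ℝ) → ℝ)
    (hΨ : ∀ l : Fin M → ℝ, Ψ l = Real.log (Z l) + ∑ k : Fin M, l k * μ k)
    (lstar : Fin M → ℝ)
    (hmin : ∀ l : Fin M → ℝ, Ψ lstar ≤ Ψ l)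
    (q : ℕ → ℝ)
    (hq : ∀ x : ℕ,
      q x = Real.exp (-∑ k : Fin M, lstar k * (x : ℝ) ^ (k.1 + 1)) / Z lstar) :
    (∀ k : Fin M, ∑ x ∈ S, (x : ℝ) ^ (k.1 + 1) * q x = μ k) ∧
      (-∑ x ∈ S, q x * Real.log (q x) = Ψ lstar) ∧
      (∀ g : ℕ → ℝ, (∀ x ∈ S, 0 ≤ g x) → (∑ x ∈ S, g x = 1) →
        (∀ k : Fin M, ∑ x ∈ S, (x : ℝ) ^ (k.1 + 1) * g x = μ k) →
        -∑ x ∈ S, g x * Real.log (g x) ≤ -∑ x ∈ S, q x * Real.log (q x)) := by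
  obtain rfl : Z = partitionFunction S fun x k ↦ (x : ℝ) ^ (k.1 + 1) := funext hZ
  obtain rfl : Ψ = entropyDual S (fun x k ↦ (x : ℝ) ^ (k.1 + 1)) μ := funext hΨ
  obtain rfl : q = gibbsDensity S (fun x k ↦ (x : ℝ) ^ (k.1 + 1)) lstar := funext hq
  obtain ⟨hmoment, hentropy, hmax⟩ := maxEntropy_strong_duality_general hS (.of_forall hmin)
  exact ⟨congrFun hmoment, hentropy, fun g hg₀ hg₁ hgμ ↦ hmax g hg₀ hg₁ (funext hgμ)⟩
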